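/- Let Φ be a generalized Horn first-order theory. For every ground disjunctive logic program P, ι^∨_HP(Φ,P) ≡ᴱ_oga ι^∨_EH(Φ,P); and for every ground normal logic program P, ι_HP(Φ,P) ≡ᴱ_oga ι_EH(Φ,P). -/

import Mathlib

set_option autoImplicit false

/-! # First-order autoepistemic logic (FO-AEL): syntax -/

structure Sig : Type 1 where
  Func : Type
  Pred : Type
  arF : Func → ℕ
  arP : Pred → ℕ

inductive Term (S : Sig) : Type
  | var : ℕ → Term S
  | func : (f : S.Func) → (Fin (S.arF f) → Term S) → Term S

inductive Formula (S : Sig) : Type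
  | atom : (p : S.Pred) → (Fin (S.arP p) → Term S) → Formula S
  | eq : Term S → Term S → Formula S
  | not : Formula S → Formula S
  | and : Formula S → Formula S → Formula S
  | ex : ℕ → Formula S → Formula S
  | box : Formula S → Formula S

namespace Term

variable {S : Sig}

/-- A term is ground if it contains no variables; ground terms are the *names*. -/
def isGround : Term S → Prop
  | var _ => False
  | func _ ts => ∀ i, (ts i).isGround

def hasVar (x : ℕ) : Term S → Prop
  | var y => y = x
  | func _ ts => ∃ i, (ts i).hasVar x

/-- Application of a partial (name) substitution to a term. -/
def subst (β : ℕ → Option (Term S)) : Term S → Term S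
  | var x => (β x).getD (var x)
  | func f ts => func f (fun i => (ts i).subst β)

/-- The function symbols occurring in a term. -/
def funcs : Term S → Set S.Func
  | var _ => ∅
  | func f ts => insert f (⋃ i, (ts i).funcs)

/-- `t` is a name (ground term) over the set `F` of function symbols. -/
def isNameOf (F : Set S.Func) : Term S → Prop
  | var _ => False
  | func f ts => f ∈ F ∧ ∀ i, (ts i).isNameOf F

end Term

namespace Formula

variable {S : Sig}

/-- A formula is objective if it is 𝖫-free. -/
def isObjective : Formula S → Prop
  | atom _ _ => True
  | eq _ _ => True
  | not φ => φ.isObjective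
  | and φ ψ => φ.isObjective ∧ ψ.isObjective
  | ex _ φ => φ.isObjective
  | box _ => False

def isGround : Formula S → Prop
  | atom _ ts => ∀ i, (ts i).isGround
  | eq t₁ t₂ => t₁.isGround ∧ t₂.isGround
  | not φ => φ.isGround
  | and φ ψ => φ.isGround ∧ ψ.isGround
  | ex _ _ => False
  | box φ => φ.isGround

def isAtomic : Formula S → Prop
  | atom _ _ => True
  | eq _ _ => True
  | not _ => False
  | and _ _ => False
  | ex _ _ => False
  | box _ => False

/-- The modal operator 𝖫 occurs only applied to (objective) atomic formulas. -/
def boxAtomic : Formula S → Prop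
  | atom _ _ => True
  | eq _ _ => True
  | not φ => φ.boxAtomic
  | and φ ψ => φ.boxAtomic ∧ ψ.boxAtomic
  | ex _ φ => φ.boxAtomic
  | box φ => φ.isAtomic

/-- Propositional formulas: built from 0-ary predicates only. -/
def isPropositional : Formula S → Prop
  | atom p _ => S.arP p = 0
  | eq _ _ => False
  | not φ => φ.isPropositional
  | and φ ψ => φ.isPropositional ∧ ψ.isPropositional
  | ex _ _ => False
  | box _ => False

def freeIn (x : ℕ) : Formula S → Prop
  | atom _ ts => ∃ i, (ts i).hasVar x
  | eq t₁ t₂ => t₁.hasVar x ∨ t₂.hasVar x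
  | not φ => φ.freeIn x
  | and φ ψ => φ.freeIn x ∨ ψ.freeIn x
  | ex y φ => x ≠ y ∧ φ.freeIn x
  | box φ => φ.freeIn x

/-- A formula is closed (a sentence) if it has no free variables. -/
def closed (φ : Formula S) : Prop := ∀ x, ¬ φ.freeIn x

/-- Capture-avoiding application of a partial name substitution (values are ground). -/
def subst (β : ℕ → Option (Term S)) : Formula S → Formula S
  | atom p ts => atom p (fun i => (ts i).subst β)
  | eq t₁ t₂ => eq (t₁.subst β) (t₂.subst β)
  | not φ => not (φ.subst β)
  | and φ ψ => and (φ.subst β) (ψ.subst β)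
  | ex y φ => ex y (φ.subst (fun z => if z = y then none else β z))
  | box φ => box (φ.subst β)

def funcs : Formula S → Set S.Func
  | atom _ ts => ⋃ i, (ts i).funcs
  | eq t₁ t₂ => t₁.funcs ∪ t₂.funcs
  | not φ => φ.funcs
  | and φ ψ => φ.funcs ∪ ψ.funcs
  | ex _ φ => φ.funcs
  | box φ => φ.funcs

def preds : Formula S → Set S.Pred
  | atom p _ => {p}
  | eq _ _ => ∅
  | not φ => φ.preds
  | and φ ψ => φ.preds ∪ ψ.preds
  | ex _ φ => φ.preds
  | box φ => φ.preds

/-- `φ ∨ ψ` as an abbreviation: `¬(¬φ ∧ ¬ψ)`. -/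
def or (φ ψ : Formula S) : Formula S := not (and (not φ) (not ψ))

/-- `φ ⊃ ψ` as an abbreviation: `¬(φ ∧ ¬ψ)`. -/
def imp (φ ψ : Formula S) : Formula S := not (and φ (not ψ))

/-- `∀x.φ` as an abbreviation: `¬∃x.¬φ`. -/
def all (x : ℕ) (φ : Formula S) : Formula S := not (ex x (not φ))

end Formula

/-! ## Semantics -/

structure Interp (S : Sig) where
  U : Type
  nonempty : Nonempty U
  interpF : (f : S.Func) → (Fin (S.arF f) → U) → U
  interpP : (p : S.Pred) → (Fin (S.arP p) → U) → Prop

noncomputable def Interp.dflt {S : Sig} (w : Interp S) : w.U := Classical.choice w.nonempty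

def Term.eval {S : Sig} (w : Interp S) (B : ℕ → w.U) : Term S → w.U
  | Term.var x => B x
  | Term.func f ts => w.interpF f (fun i => (ts i).eval w B)

/-- Evaluation of a ground term (the assignment is irrelevant). -/
noncomputable def Term.evalG {S : Sig} (w : Interp S) (t : Term S) : w.U :=
  t.eval w (fun _ => w.dflt)

/-- An individual is named if some name (ground term) denotes it. -/
def IsNamed {S : Sig} (w : Interp S) (k : w.U) : Prop :=
  ∃ t : Term S, t.isGround ∧ Term.evalG w t = k

/-- A name substitution `β` is associated with the variable assignment `B`:
its domain is exactly the set of variables whose `B`-value is named, and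
it assigns to each such variable a name denoting its `B`-value. -/
def Assoc {S : Sig} (w : Interp S) (B : ℕ → w.U) (β : ℕ → Option (Term S)) : Prop :=
  ∀ x : ℕ,
    (IsNamed w (B x) → (β x).isSome) ∧
    (∀ t : Term S, β x = some t → t.isGround ∧ Term.evalG w t = B x)

/-- The two semantics: any-name (E) and all-name (A). -/
inductive Sem : Type
  | any
  | all

/-- Satisfaction of a formula in an autoepistemic interpretation `⟨w,Γ⟩`
under a variable assignment, for the any-name (E) resp. all-name (A) semantics. -/
def Sat {S : Sig} (X : Sem) (w : Interp S) (Γ : Set (Formula S)) :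
    Formula S → (ℕ → w.U) → Prop
  | Formula.atom p ts, B => w.interpP p (fun i => (ts i).eval w B)
  | Formula.eq t₁ t₂, B => t₁.eval w B = t₂.eval w B
  | Formula.not φ, B => ¬ Sat X w Γ φ B
  | Formula.and φ ψ, B => Sat X w Γ φ B ∧ Sat X w Γ ψ B
  | Formula.ex x φ, B => ∃ u : w.U, Sat X w Γ φ (Function.update B x u)
  | Formula.box φ, B =>
      match X with
      | Sem.any => ∃ β, Assoc w B β ∧ (φ.subst β).closed ∧ φ.subst β ∈ Γ
      | Sem.all => ∀ β, Assoc w B β → (φ.subst β).closed ∧ φ.subst β ∈ Γ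

def ModelsF {S : Sig} (X : Sem) (w : Interp S) (Γ : Set (Formula S)) (φ : Formula S) : Prop :=
  ∀ B : ℕ → w.U, Sat X w Γ φ B

def ModelsT {S : Sig} (X : Sem) (w : Interp S) (Γ Φ : Set (Formula S)) : Prop :=
  ∀ φ ∈ Φ, ModelsF X w Γ φ

/-- `Φ ⊨ˣ_Γ φ`. -/
def Entails {S : Sig} (X : Sem) (Φ Γ : Set (Formula S)) (φ : Formula S) : Prop :=
  ∀ w : Interp S, ModelsT X w Γ Φ → ModelsF X w Γ φ

/-- The standard names assumption: all names are interpreted distinctly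
and every individual is named. -/
def SNA {S : Sig} (w : Interp S) : Prop :=
  (∀ t₁ t₂ : Term S, t₁.isGround → t₂.isGround → Term.evalG w t₁ = Term.evalG w t₂ → t₁ = t₂) ∧
  (∀ k : w.U, IsNamed w k)

/-- Entailment restricted to interpretations satisfying the standard names assumption. -/
def EntailsSN {S : Sig} (X : Sem) (Φ Γ : Set (Formula S)) (φ : Formula S) : Prop :=
  ∀ w : Interp S, SNA w → ModelsT X w Γ Φ → ModelsF X w Γ φ

/-- `T` is a stableˣ expansion of `Φ`. -/
def StableExp {S : Sig} (X : Sem) (Φ T : Set (Formula S)) : Prop :=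
  T = {φ | Entails X Φ T φ}

def objOf {S : Sig} (T : Set (Formula S)) : Set (Formula S) :=
  {φ ∈ T | φ.isObjective}

def ogOf {S : Sig} (T : Set (Formula S)) : Set (Formula S) :=
  {φ ∈ T | φ.isObjective ∧ φ.isGround}

def ogaOf {S : Sig} (T : Set (Formula S)) : Set (Formula S) :=
  {φ ∈ T | φ.isObjective ∧ φ.isGround ∧ φ.isAtomic}

def Consistent {S : Sig} (T : Set (Formula S)) : Prop := T ≠ Set.univ

/-- `Φ₁ ≡ˣ Φ₂`: same stableˣ expansions. -/
def ExpEquiv {S : Sig} (X : Sem) (Φ₁ Φ₂ : Set (Formula S)) : Prop :=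
  ∀ T, StableExp X Φ₁ T ↔ StableExp X Φ₂ T

/-- `Φ₁ ≡ˣ_γ Φ₂` for a selector `sel` (e.g. `ogaOf`): the stableˣ expansions
correspond with respect to `sel`. -/
def ExpEquivSel {S : Sig} (X : Sem) (sel : Set (Formula S) → Set (Formula S))
    (Φ₁ Φ₂ : Set (Formula S)) : Prop :=
  (∀ T, StableExp X Φ₁ T → ∃ T', StableExp X Φ₂ T' ∧ sel T = sel T') ∧
  (∀ T', StableExp X Φ₂ T' → ∃ T, StableExp X Φ₁ T ∧ sel T = sel T')

/-- Autoepistemicˣ consequences of `Φ`. -/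
def Cn {S : Sig} (X : Sem) (Φ : Set (Formula S)) : Set (Formula S) :=
  {φ | ∀ T, StableExp X Φ T → φ ∈ T}

def CnO {S : Sig} (X : Sem) (Φ : Set (Formula S)) : Set (Formula S) :=
  {φ ∈ Cn X Φ | φ.isObjective}

def CnOg {S : Sig} (X : Sem) (Φ : Set (Formula S)) : Set (Formula S) :=
  {φ ∈ Cn X Φ | φ.isObjective ∧ φ.isGround}

/-! ## Logic programs -/

structure PAtom (S : Sig) where
  p : S.Pred
  args : Fin (S.arP p) → Term S

namespace PAtom

variable {S : Sig}

def toFormula (a : PAtom S) : Formula S := Formula.atom a.p a.args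

def isGround (a : PAtom S) : Prop := ∀ i, (a.args i).isGround

def hasVar (x : ℕ) (a : PAtom S) : Prop := ∃ i, (a.args i).hasVar x

def substA (σ : ℕ → Term S) (a : PAtom S) : PAtom S :=
  ⟨a.p, fun i => (a.args i).subst (fun x => some (σ x))⟩

def funcs (a : PAtom S) : Set S.Func := ⋃ i, (a.args i).funcs

end PAtom

/-- A (disjunctive) rule `h₁ | … | h_l ← b₁,…,b_m, not c₁,…,not c_n`,
together with a list of the variables occurring in it. -/
structure Rule (S : Sig) where
  head : List (PAtom S)
  pos : List (PAtom S)
  neg : List (PAtom S)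
  vars : List ℕ

namespace Rule

variable {S : Sig}

def atoms (r : Rule S) : List (PAtom S) := r.head ++ r.pos ++ r.neg

def hasVar (x : ℕ) (r : Rule S) : Prop := ∃ a ∈ r.atoms, PAtom.hasVar x a

/-- Well-formedness: at least one head atom, and `vars` lists all variables of the rule. -/
def wf (r : Rule S) : Prop := r.head ≠ [] ∧ ∀ x, r.hasVar x → x ∈ r.vars

def isNormal (r : Rule S) : Prop := r.head.length = 1

def isGround (r : Rule S) : Prop := (∀ a ∈ r.atoms, a.isGround) ∧ r.vars = []

def isSafe (r : Rule S) : Prop := ∀ x, r.hasVar x → ∃ a ∈ r.pos, PAtom.hasVar x a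

def isPositive (r : Rule S) : Prop := r.neg = []

def applySubst (σ : ℕ → Term S) (r : Rule S) : Rule S :=
  ⟨r.head.map (PAtom.substA σ), r.pos.map (PAtom.substA σ), r.neg.map (PAtom.substA σ), []⟩

end Rule

abbrev Program (S : Sig) := Set (Rule S)

def progWf {S : Sig} (P : Program S) : Prop := ∀ r ∈ P, r.wf
def progNormal {S : Sig} (P : Program S) : Prop := ∀ r ∈ P, r.isNormal
def progGround {S : Sig} (P : Program S) : Prop := ∀ r ∈ P, r.isGround
def progSafe {S : Sig} (P : Program S) : Prop := ∀ r ∈ P, r.isSafe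
def progPositive {S : Sig} (P : Program S) : Prop := ∀ r ∈ P, r.isPositive

/-- The function symbols occurring in `P` (part of the signature `Σ_P`). -/
def progFuncs {S : Sig} (P : Program S) : Set S.Func :=
  {f | ∃ r ∈ P, ∃ a ∈ r.atoms, f ∈ a.funcs}

/-- The predicate symbols occurring in `P` (part of the signature `Σ_P`). -/
def progPreds {S : Sig} (P : Program S) : Set S.Pred :=
  {q | ∃ r ∈ P, ∃ a ∈ r.atoms, a.p = q}

/-- The ambient signature is exactly the signature `Σ_P` of `P`. -/
def fullSig {S : Sig} (P : Program S) : Prop :=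
  (∀ f : S.Func, f ∈ progFuncs P) ∧ (∀ q : S.Pred, q ∈ progPreds P)

/-- Standing assumption: `Σ_P` contains a 0-ary function symbol whenever it
has a predicate symbol of arity greater than 0. -/
def goodSig {S : Sig} (P : Program S) : Prop :=
  (∃ q ∈ progPreds P, 0 < S.arP q) → ∃ f ∈ progFuncs P, S.arF f = 0

/-! ## Embeddings of logic programs into FO-AEL -/

def andAll {S : Sig} : Formula S → List (Formula S) → Formula S
  | φ, [] => φ
  | φ, ψ :: rest => andAll (Formula.and φ ψ) rest

def orAll {S : Sig} : Formula S → List (Formula S) → Formula S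
  | φ, [] => φ
  | φ, ψ :: rest => orAll (Formula.or φ ψ) rest

/-- `impOf ants c` is `⋀ ants ⊃ c` (just `c` if there are no antecedents). -/
def impOf {S : Sig} : List (Formula S) → Formula S → Formula S
  | [], c => c
  | a :: rest, c => Formula.imp (andAll a rest) c

/-- Disjunction of a nonempty list (junk value on the empty list,
which is excluded by rule well-formedness). -/
def disjOf {S : Sig} : List (Formula S) → Formula S
  | [] => Formula.eq (Term.var 0) (Term.var 0)
  | h :: rest => orAll h rest

/-- Universal uclosure over the listed variables. -/
def uclosure {S : Sig} (vs : List ℕ) (φ : Formula S) : Formula S :=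
  vs.foldr Formula.all φ

def bodyHP {S : Sig} (r : Rule S) : List (Formula S) :=
  r.pos.map PAtom.toFormula ++ r.neg.map (fun c => Formula.not (Formula.box c.toFormula))

def bodyE {S : Sig} (r : Rule S) : List (Formula S) :=
  r.pos.map (fun b => Formula.and b.toFormula (Formula.box b.toFormula)) ++
    r.neg.map (fun c => Formula.not (Formula.box c.toFormula))

/-- `τ_HP(r)` resp. `τ^∨_HP(r)`. -/
def embHP {S : Sig} (r : Rule S) : Formula S :=
  uclosure r.vars (impOf (bodyHP r) (disjOf (r.head.map PAtom.toFormula)))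

/-- `τ_EB(r)` resp. `τ^∨_EB(r)`. -/
def embEB {S : Sig} (r : Rule S) : Formula S :=
  uclosure r.vars (impOf (bodyE r) (disjOf (r.head.map PAtom.toFormula)))

/-- `τ_EH(r)` resp. `τ^∨_EH(r)`. -/
def embEH {S : Sig} (r : Rule S) : Formula S :=
  uclosure r.vars (impOf (bodyE r)
    (disjOf (r.head.map (fun h => Formula.and h.toFormula (Formula.box h.toFormula)))))

/-- The unique-names axioms `¬𝖫(t₁=t₂) ⊃ t₁≠t₂` for distinct names of `Σ_P`. -/
def UNAax {S : Sig} (P : Program S) : Set (Formula S) :=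
  {φ | ∃ t₁ t₂ : Term S, t₁.isNameOf (progFuncs P) ∧ t₂.isNameOf (progFuncs P) ∧ t₁ ≠ t₂ ∧
        φ = Formula.imp (Formula.not (Formula.box (Formula.eq t₁ t₂)))
              (Formula.not (Formula.eq t₁ t₂))}

/-- The positive introspection axioms `α ⊃ 𝖫α` for objective ground atoms of `Σ_P`. -/
def PIAax {S : Sig} (P : Program S) : Set (Formula S) :=
  {φ | ∃ a : PAtom S, a.p ∈ progPreds P ∧ (∀ i, (a.args i).isNameOf (progFuncs P)) ∧
        φ = Formula.imp a.toFormula (Formula.box a.toFormula)}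

def ruleEmb {S : Sig} (emb : Rule S → Formula S) (P : Program S) : Set (Formula S) :=
  {φ | ∃ r ∈ P, φ = emb r}

def tauHP {S : Sig} (P : Program S) : Set (Formula S) := ruleEmb embHP P ∪ UNAax P
def tauEB {S : Sig} (P : Program S) : Set (Formula S) := ruleEmb embEB P ∪ UNAax P
def tauEH {S : Sig} (P : Program S) : Set (Formula S) := ruleEmb embEH P ∪ UNAax P
def tauHPv {S : Sig} (P : Program S) : Set (Formula S) := ruleEmb embHP P ∪ PIAax P ∪ UNAax P
def tauEBv {S : Sig} (P : Program S) : Set (Formula S) := ruleEmb embEB P ∪ PIAax P ∪ UNAax P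
def tauEHv {S : Sig} (P : Program S) : Set (Formula S) := ruleEmb embEH P ∪ UNAax P
def tauHPminus {S : Sig} (P : Program S) : Set (Formula S) := ruleEmb embHP P
def tauEHvminus {S : Sig} (P : Program S) : Set (Formula S) := ruleEmb embEH P

/-! ## Grounding and stable models -/

/-- The grounding of `P`: all ground instantiations of rules of `P`
obtained by replacing variables with names of `Σ_P`. -/
def grP {S : Sig} (P : Program S) : Program S :=
  {r' | ∃ r ∈ P, ∃ σ : ℕ → Term S,
        (∀ x, r.hasVar x → (σ x).isNameOf (progFuncs P)) ∧ r' = Rule.applySubst σ r}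

/-- A Herbrand interpretation: a set of ground atomic formulas. -/
def HerbrandI {S : Sig} (M : Set (Formula S)) : Prop :=
  ∀ φ ∈ M, φ.isAtomic ∧ φ.isGround

/-- `M` is a Herbrand model of the positive ground program `Q` (relative to the
names of `Σ_P`): rules are satisfied and `t = t ∈ M` for every name `t`. -/
def HerbrandModelOf {S : Sig} (P Q : Program S) (M : Set (Formula S)) : Prop :=
  HerbrandI M ∧
  (∀ r ∈ Q, (∀ b ∈ r.pos, PAtom.toFormula b ∈ M) → ∃ h ∈ r.head, PAtom.toFormula h ∈ M) ∧
  (∀ t : Term S, t.isNameOf (progFuncs P) → Formula.eq t t ∈ M)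

/-- The Gelfond–Lifschitz reduct of `gr(P)` with respect to `M`. -/
def reduct {S : Sig} (P : Program S) (M : Set (Formula S)) : Program S :=
  {r' | ∃ r ∈ grP P, (∀ c ∈ r.neg, PAtom.toFormula c ∉ M) ∧
        r' = ⟨r.head, r.pos, [], r.vars⟩}

/-- `M` is a stable model of `P`: a minimal Herbrand model of the reduct of `gr(P)` w.r.t. `M`. -/
def isStableModel {S : Sig} (P : Program S) (M : Set (Formula S)) : Prop :=
  HerbrandModelOf P (reduct P M) M ∧
  ∀ M', M' ⊆ M → HerbrandModelOf P (reduct P M) M' → M' = M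

/-! ## First-order theories and classes thereof -/

/-- An FO theory: a set of objective sentences. -/
def FOTheory {S : Sig} (Φ : Set (Formula S)) : Prop :=
  ∀ φ ∈ Φ, φ.isObjective ∧ φ.closed

def theoryFuncs {S : Sig} (Φ : Set (Formula S)) : Set S.Func := {f | ∃ φ ∈ Φ, f ∈ φ.funcs}
def theoryPreds {S : Sig} (Φ : Set (Formula S)) : Set S.Pred := {q | ∃ φ ∈ Φ, q ∈ φ.preds}

/-- The ambient signature is exactly the union of the signatures of `Φ` and `P`. -/
def CoverSig {S : Sig} (Φ : Set (Formula S)) (P : Program S) : Prop :=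
  (∀ f : S.Func, f ∈ theoryFuncs Φ ∪ progFuncs P) ∧
  (∀ q : S.Pred, q ∈ theoryPreds Φ ∪ progPreds P)

def exClosure {S : Sig} (ys : List ℕ) (φ : Formula S) : Formula S := ys.foldr Formula.ex φ

/-- A Horn sentence `(∀)(b₁ ∧ … ∧ b_n ⊃ h)` with atomic `b_i`, `h`
(the consequent `h` may be absent). -/
def isHornSentence {S : Sig} (φ : Formula S) : Prop :=
  ∃ (vs : List ℕ) (bs : List (Formula S)),
    (∀ b ∈ bs, b.isAtomic) ∧
    ((∃ h : Formula S, h.isAtomic ∧ φ = uclosure vs (impOf bs h)) ∨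
     (∃ b rest, bs = b :: rest ∧ φ = uclosure vs (Formula.not (andAll b rest))))

def HornTheory {S : Sig} (Φ : Set (Formula S)) : Prop :=
  FOTheory Φ ∧ ∀ φ ∈ Φ, isHornSentence φ

/-- A generalized Horn sentence `(∀)(b₁ ∧ … ∧ b_n ⊃ ∃ȳ.h)` with atomic `b_i`, `h`,
the variables `ȳ` occurring only in `h` (the consequent may be absent). -/
def isGHornSentence {S : Sig} (φ : Formula S) : Prop :=
  ∃ (vs : List ℕ) (bs : List (Formula S)),
    (∀ b ∈ bs, b.isAtomic) ∧
    ((∃ (ys : List ℕ) (h : Formula S), h.isAtomic ∧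
        (∀ y ∈ ys, ∀ b ∈ bs, ¬ b.freeIn y) ∧
        φ = uclosure vs (impOf bs (exClosure ys h))) ∨
     (∃ b rest, bs = b :: rest ∧ φ = uclosure vs (Formula.not (andAll b rest))))

def GHornTheory {S : Sig} (Φ : Set (Formula S)) : Prop :=
  FOTheory Φ ∧ ∀ φ ∈ Φ, isGHornSentence φ

def PropTheory {S : Sig} (Φ : Set (Formula S)) : Prop :=
  FOTheory Φ ∧ ∀ φ ∈ Φ, φ.isPropositional

/-!
Fix a belief set `Γ` and let `A` be its objective ground atoms. For a ground program, both
embeddings constrain an interpretation `w` only through its positive diagram `D`: `HP` says that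
`D` is a model of the reduct of `P` by `A`, and `EH` says that `D ∩ A` is one. If `A` is exactly the
set of ground atoms entailed by either combination, then every model of `Φ` can be multiplied with
one countermodel for each ground atom outside `A`; as `Φ` is preserved under direct products, the
result is a model of `Φ` with diagram `D ∩ A`. So `EH`-models restrict to `HP`-models. Conversely,
`HP`-models are `EH`-models: positive introspection puts true heads into `A`, and for a normal
program `A` is itself a model of the reduct, and models of a normal program intersect. Hence both
combinations entail the same ground atoms, and the ground atoms of a stable expansion determine it.
-/

section

variable {S : Sig}

/-! ### Ground atoms -/

namespace Term

theorem eval_congr_of_isGround (w : Interp S) (B B' : ℕ → w.U) {t : Term S} (h : t.isGround) :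
    t.eval w B = t.eval w B' := by
  induction t with
  | var x => exact h.elim
  | func f ts ih => exact congrArg (w.interpF f) (funext fun i => ih i (h i))

theorem subst_eq_self_of_isGround (β : ℕ → Option (Term S)) {t : Term S} (h : t.isGround) :
    t.subst β = t := by
  induction t with
  | var x => exact h.elim
  | func f ts ih => exact congrArg (func f) (funext fun i => ih i (h i))

theorem not_hasVar_of_isGround (x : ℕ) {t : Term S} (h : t.isGround) : ¬ t.hasVar x := by
  induction t with
  | var y => exact h.elim
  | func f ts ih => exact fun ⟨i, hi⟩ => ih i (h i) hi

theorem isGround_of_isNameOf {F : Set S.Func} {t : Term S} (h : t.isNameOf F) : t.isGround := by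
  induction t with
  | var x => exact h.elim
  | func f ts ih => exact fun i => ih i (h.2 i)

theorem isNameOf_of_isGround {F : Set S.Func} {t : Term S} (h : t.isGround) (hF : t.funcs ⊆ F) :
    t.isNameOf F := by
  induction t with
  | var x => exact h.elim
  | func f ts ih =>
    obtain ⟨hf, hts⟩ := Set.insert_subset_iff.1 hF
    exact ⟨hf, fun i => ih i (h i) ((Set.subset_iUnion _ i).trans hts)⟩

end Term

/-- Ground atomic formulas, equations included: the formulas that `ogaOf` selects. -/
inductive Formula.IsGroundAtom : Formula S → Prop
  | atom {p : S.Pred} {ts : Fin (S.arP p) → Term S} (h : ∀ i, (ts i).isGround) :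
      IsGroundAtom (Formula.atom p ts)
  | eq {t₁ t₂ : Term S} (h₁ : t₁.isGround) (h₂ : t₂.isGround) : IsGroundAtom (Formula.eq t₁ t₂)

namespace Formula.IsGroundAtom

variable {α : Formula S}

theorem subst_eq_self (hα : α.IsGroundAtom) (β : ℕ → Option (Term S)) : α.subst β = α := by
  rcases hα with h | ⟨h₁, h₂⟩
  · exact congrArg (Formula.atom _) (funext fun i => Term.subst_eq_self_of_isGround β (h i))
  · exact congrArg₂ Formula.eq (Term.subst_eq_self_of_isGround β h₁)
      (Term.subst_eq_self_of_isGround β h₂)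

theorem closed (hα : α.IsGroundAtom) : α.closed := by
  rcases hα with h | ⟨h₁, h₂⟩
  · exact fun x ⟨i, hi⟩ => Term.not_hasVar_of_isGround x (h i) hi
  · exact fun x =>
      not_or_intro (Term.not_hasVar_of_isGround x h₁) (Term.not_hasVar_of_isGround x h₂)

theorem sat_congr (hα : α.IsGroundAtom) {X X' : Sem} {w : Interp S} {Γ Γ' : Set (Formula S)}
    {B B' : ℕ → w.U} : Sat X w Γ α B ↔ Sat X' w Γ' α B' := by
  rcases hα with h | ⟨h₁, h₂⟩
  · simp only [Sat, fun i => Term.eval_congr_of_isGround w B B' (h i)]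
  · simp only [Sat, Term.eval_congr_of_isGround w B B' h₁, Term.eval_congr_of_isGround w B B' h₂]

end Formula.IsGroundAtom

theorem mem_ogaOf_iff {T : Set (Formula S)} {φ : Formula S} :
    φ ∈ ogaOf T ↔ φ ∈ T ∧ φ.IsGroundAtom := by
  refine and_congr_right fun _ => ⟨fun ⟨_, hg, ha⟩ => ?_, ?_⟩
  · cases φ with
    | atom p ts => exact .atom hg
    | eq t₁ t₂ => exact .eq hg.1 hg.2
    | _ => exact ha.elim
  · rintro (h | ⟨h₁, h₂⟩)
    · exact ⟨trivial, h, trivial⟩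
    · exact ⟨trivial, ⟨h₁, h₂⟩, trivial⟩

theorem PAtom.isGroundAtom_toFormula {a : PAtom S} (h : a.isGround) :
    a.toFormula.IsGroundAtom :=
  .atom h

/-! ### Satisfaction -/

section Sat

variable {X : Sem} {w : Interp S} {Γ : Set (Formula S)} {B : ℕ → w.U}

theorem modelsF_iff_of_forall_sat_iff {φ : Formula S} {p : Prop} (h : ∀ B, Sat X w Γ φ B ↔ p) :
    ModelsF X w Γ φ ↔ p :=
  have := w.nonempty
  (forall_congr' h).trans (forall_const _)

/-- The positive diagram of `w`: the ground atoms true in `w`. Whether a ground atom is true depends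
neither on the semantics nor on the belief set, so both are fixed arbitrarily. -/
def Interp.posDiagram (w : Interp S) : Set (Formula S) :=
  {α | α.IsGroundAtom ∧ ModelsF Sem.any w ∅ α}

theorem Formula.IsGroundAtom.sat_iff_mem_posDiagram {α : Formula S} (hα : α.IsGroundAtom) :
    Sat X w Γ α B ↔ α ∈ w.posDiagram :=
  Iff.symm <| (and_iff_right hα).trans <| modelsF_iff_of_forall_sat_iff fun _ => hα.sat_congr

theorem exists_assoc (w : Interp S) (B : ℕ → w.U) : ∃ β, Assoc w B β := by
  classical
  refine ⟨fun x => if h : IsNamed w (B x) then some h.choose else none, fun x => ?_⟩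
  by_cases h : IsNamed w (B x)
  · simpa [h] using h.choose_spec
  · simp [h]

theorem Formula.IsGroundAtom.sat_box_iff {α : Formula S} (hα : α.IsGroundAtom) :
    Sat X w Γ (Formula.box α) B ↔ α ∈ ogaOf Γ := by
  obtain ⟨β, hβ⟩ := exists_assoc w B
  cases X <;>
    simp only [Sat, hα.subst_eq_self, hα.closed, mem_ogaOf_iff, hα, true_and, and_true]
  · exact ⟨fun ⟨_, _, h⟩ => h, fun h => ⟨β, hβ, h⟩⟩
  · exact ⟨fun h => h β hβ, fun h _ _ => h⟩

theorem sat_imp {φ ψ : Formula S} :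
    Sat X w Γ (φ.imp ψ) B ↔ (Sat X w Γ φ B → Sat X w Γ ψ B) := by
  simp only [Formula.imp, Sat]
  tauto

theorem sat_or {φ ψ : Formula S} :
    Sat X w Γ (φ.or ψ) B ↔ Sat X w Γ φ B ∨ Sat X w Γ ψ B := by
  simp only [Formula.or, Sat]
  tauto

theorem sat_all {x : ℕ} {φ : Formula S} :
    Sat X w Γ (φ.all x) B ↔ ∀ u, Sat X w Γ φ (Function.update B x u) := by
  simp only [Formula.all, Sat, not_exists, not_not]

theorem sat_andAll {φ : Formula S} {l : List (Formula S)} :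
    Sat X w Γ (andAll φ l) B ↔ ∀ ψ ∈ φ :: l, Sat X w Γ ψ B := by
  induction l generalizing φ with
  | nil => simp only [andAll, List.forall_mem_singleton]
  | cons a l ih => simp only [andAll, ih, List.forall_mem_cons, Sat, and_assoc]

theorem sat_orAll {φ : Formula S} {l : List (Formula S)} :
    Sat X w Γ (orAll φ l) B ↔ ∃ ψ ∈ φ :: l, Sat X w Γ ψ B := by
  induction l generalizing φ with
  | nil => simp only [orAll, List.mem_singleton, exists_eq_left]
  | cons a l ih => simp only [orAll, ih, List.exists_mem_cons_iff, sat_or, or_assoc]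

theorem sat_impOf {l : List (Formula S)} {φ : Formula S} :
    Sat X w Γ (impOf l φ) B ↔ ((∀ ψ ∈ l, Sat X w Γ ψ B) → Sat X w Γ φ B) := by
  cases l with
  | nil => simp [impOf]
  | cons a l => simp only [impOf, sat_imp, sat_andAll]

theorem sat_disjOf {l : List (Formula S)} (hl : l ≠ []) :
    Sat X w Γ (disjOf l) B ↔ ∃ ψ ∈ l, Sat X w Γ ψ B := by
  cases l with
  | nil => exact (hl rfl).elim
  | cons a l => exact sat_orAll

theorem sat_congr_of_isObjective {X' : Sem} {Γ' : Set (Formula S)} {φ : Formula S}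
    (hφ : φ.isObjective) : Sat X w Γ φ B ↔ Sat X' w Γ' φ B := by
  induction φ generalizing B with
  | atom | eq => rfl
  | not φ ih => exact not_congr (ih hφ)
  | and φ ψ ihφ ihψ => exact and_congr (ihφ hφ.1) (ihψ hφ.2)
  | ex x φ ih => exact exists_congr fun u => ih hφ
  | box => exact hφ.elim

theorem modelsT_congr_of_isObjective {X' : Sem} {Γ' Φ : Set (Formula S)}
    (hΦ : ∀ φ ∈ Φ, φ.isObjective) : ModelsT X w Γ Φ ↔ ModelsT X' w Γ' Φ :=
  forall₂_congr fun φ hφ => forall_congr' fun _ => sat_congr_of_isObjective (hΦ φ hφ)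

theorem modelsT_union {Φ Ψ : Set (Formula S)} :
    ModelsT X w Γ (Φ ∪ Ψ) ↔ ModelsT X w Γ Φ ∧ ModelsT X w Γ Ψ := by
  simp only [ModelsT, Set.mem_union, or_imp, forall_and]

end Sat

/-! ### Stable expansions from their ground atoms -/

/-- The nesting depth of the modal operator. -/
def Formula.modalDepth : Formula S → ℕ
  | atom _ _ => 0
  | eq _ _ => 0
  | not φ => φ.modalDepth
  | and φ ψ => max φ.modalDepth ψ.modalDepth
  | ex _ φ => φ.modalDepth
  | box φ => φ.modalDepth + 1

theorem Formula.modalDepth_subst (φ : Formula S) (β : ℕ → Option (Term S)) :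
    (φ.subst β).modalDepth = φ.modalDepth := by
  induction φ generalizing β <;> simp_all [Formula.subst, Formula.modalDepth]

theorem sat_congr_of_modalDepth {X : Sem} {w : Interp S} {Γ Γ' : Set (Formula S)} {n : ℕ}
    (hΓ : ∀ ψ : Formula S, ψ.modalDepth < n → (ψ ∈ Γ ↔ ψ ∈ Γ')) {φ : Formula S}
    (hφ : φ.modalDepth ≤ n) {B : ℕ → w.U} : Sat X w Γ φ B ↔ Sat X w Γ' φ B := by
  induction φ generalizing B with
  | atom | eq => rfl
  | not φ ih => exact not_congr (ih hφ)
  | and φ ψ ihφ ihψ =>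
    exact and_congr (ihφ ((le_max_left _ _).trans hφ)) (ihψ ((le_max_right _ _).trans hφ))
  | ex x φ ih => exact exists_congr fun u => ih hφ
  | box φ _ =>
    have hsubst (β) : φ.subst β ∈ Γ ↔ φ.subst β ∈ Γ' :=
      hΓ _ ((φ.modalDepth_subst β).trans_lt hφ)
    cases X <;> simp only [Sat, hsubst]

/-- Approximations to the beliefs of an agent considering exactly the interpretations in `K`
possible; the `n`-th one is correct on formulas of modal depth less than `n`. -/
def beliefStage (X : Sem) (K : Set (Interp S)) : ℕ → Set (Formula S)
  | 0 => ∅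
  | n + 1 => {φ | ∀ w ∈ K, ModelsF X w (beliefStage X K n) φ}

theorem mem_beliefStage_congr (X : Sem) (K : Set (Interp S)) {m n : ℕ} {φ : Formula S}
    (hm : φ.modalDepth < m) (hn : φ.modalDepth < n) :
    φ ∈ beliefStage X K m ↔ φ ∈ beliefStage X K n := by
  induction m generalizing n φ with
  | zero => exact absurd hm (Nat.not_lt_zero _)
  | succ m ih =>
    obtain ⟨n, rfl⟩ := Nat.exists_eq_succ_of_ne_zero (Nat.ne_zero_of_lt hn)
    refine forall₂_congr fun w _ => forall_congr' fun B => ?_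
    exact sat_congr_of_modalDepth (fun ψ hψ => ih (by lia) (by lia)) le_rfl

theorem exists_eq_setOf_forall_modelsF (X : Sem) (K : Set (Interp S)) :
    ∃ T : Set (Formula S), T = {φ | ∀ w ∈ K, ModelsF X w T φ} := by
  refine ⟨{φ | φ ∈ beliefStage X K (φ.modalDepth + 1)}, Set.ext fun φ => ?_⟩
  refine forall₂_congr fun w _ => forall_congr' fun B => ?_
  exact sat_congr_of_modalDepth
    (fun ψ hψ => mem_beliefStage_congr X K (n := ψ.modalDepth + 1) hψ (Nat.lt_add_one _)) le_rfl

/-- `Γ` is a stable expansion of `Ψ` as far as ground atoms are concerned. -/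
def OgaStable (X : Sem) (Ψ Γ : Set (Formula S)) : Prop :=
  ogaOf Γ = ogaOf {φ | Entails X Ψ Γ φ}

/-- Satisfaction of `Ψ` depends on the ground atoms of the belief set only. -/
def OgaDetermined (X : Sem) (Ψ : Set (Formula S)) : Prop :=
  ∀ ⦃Γ Γ' : Set (Formula S)⦄, ogaOf Γ = ogaOf Γ' → ∀ w, ModelsT X w Γ Ψ ↔ ModelsT X w Γ' Ψ

section Oga

variable {X : Sem} {Φ Ψ Γ : Set (Formula S)}

theorem mem_ogaOf_setOf_entails {α : Formula S} :
    α ∈ ogaOf {φ | Entails X Ψ Γ φ} ↔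
      α.IsGroundAtom ∧ ∀ w, ModelsT X w Γ Ψ → α ∈ w.posDiagram := by
  rw [mem_ogaOf_iff, and_comm]
  exact and_congr_right fun hα => forall₂_congr fun w _ =>
    modelsF_iff_of_forall_sat_iff fun _ => hα.sat_iff_mem_posDiagram

theorem OgaStable.mem_ogaOf_iff (hΓ : OgaStable X Ψ Γ) {α : Formula S} :
    α ∈ ogaOf Γ ↔ α.IsGroundAtom ∧ ∀ w, ModelsT X w Γ Ψ → α ∈ w.posDiagram := by
  rw [hΓ, mem_ogaOf_setOf_entails]

theorem OgaDetermined.union (hΦ : OgaDetermined X Φ) (hΨ : OgaDetermined X Ψ) :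
    OgaDetermined X (Φ ∪ Ψ) := fun _ _ h w => by
  rw [modelsT_union, modelsT_union, hΦ h, hΨ h]

theorem ogaDetermined_of_isObjective (hΦ : ∀ φ ∈ Φ, φ.isObjective) : OgaDetermined X Φ :=
  fun _ _ _ _ => modelsT_congr_of_isObjective hΦ

theorem StableExp.ogaStable (h : StableExp X Ψ Γ) : OgaStable X Ψ Γ :=
  congrArg ogaOf h

theorem OgaStable.exists_stableExp (hΨ : OgaDetermined X Ψ) (hΓ : OgaStable X Ψ Γ) :
    ∃ T, StableExp X Ψ T ∧ ogaOf Γ = ogaOf T := by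
  obtain ⟨T, hT⟩ := exists_eq_setOf_forall_modelsF X {w | ModelsT X w Γ Ψ}
  have hΓT : ogaOf Γ = ogaOf T := by
    ext α
    rw [hΓ.mem_ogaOf_iff, _root_.mem_ogaOf_iff, and_comm]
    refine and_congr_left fun hα => ?_
    rw [hT]
    exact forall₂_congr fun w _ =>
      (modelsF_iff_of_forall_sat_iff fun _ => hα.sat_iff_mem_posDiagram).symm
  refine ⟨T, hT.trans (Set.ext fun φ => ?_), hΓT⟩
  exact forall_congr' fun w => imp_congr_left (hΨ hΓT w)

theorem expEquivSel_ogaOf_of_ogaStable_iff (hΦ : OgaDetermined X Φ) (hΨ : OgaDetermined X Ψ)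
    (h : ∀ Γ, OgaStable X Φ Γ ↔ OgaStable X Ψ Γ) : ExpEquivSel X ogaOf Φ Ψ := by
  refine ⟨fun T hT => ((h T).1 hT.ogaStable).exists_stableExp hΨ, fun T hT => ?_⟩
  obtain ⟨T', hT', heq⟩ := ((h T).2 hT.ogaStable).exists_stableExp hΦ
  exact ⟨T', hT', heq.symm⟩

end Oga

/-! ### Direct products -/

/-- The direct product of a family of interpretations. -/
def Interp.pi {ι : Type} (w : ι → Interp S) : Interp S where
  U := ∀ i, (w i).U
  nonempty := ⟨fun i => (w i).dflt⟩
  interpF f a i := (w i).interpF f fun k => a k i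
  interpP p a := ∀ i, (w i).interpP p fun k => a k i

/-- A formula that holds in a nonempty direct product under an assignment whenever it holds in all
factors under the projected assignments. -/
def Formula.PreservedByProducts (φ : Formula S) : Prop :=
  ∀ ⦃ι : Type⦄ [Nonempty ι] (w : ι → Interp S) (B : ℕ → (Interp.pi w).U),
    (∀ i, Sat Sem.any (w i) ∅ φ fun x => B x i) → Sat Sem.any (Interp.pi w) ∅ φ B

/-- The class of models of `Φ` is closed under nonempty direct products. The notion is meant for
objective `Φ`, for which the choice of semantics and belief set is immaterial. -/
def ClosedUnderProducts (Φ : Set (Formula S)) : Prop :=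
  ∀ ⦃ι : Type⦄ [Nonempty ι] (w : ι → Interp S),
    (∀ i, ModelsT Sem.any (w i) ∅ Φ) → ModelsT Sem.any (Interp.pi w) ∅ Φ

section Products

theorem Term.eval_pi {ι : Type} (w : ι → Interp S) (B : ℕ → (Interp.pi w).U) (t : Term S) (i : ι) :
    t.eval (Interp.pi w) B i = t.eval (w i) fun x => B x i := by
  induction t with
  | var x => rfl
  | func f ts ih => exact congrArg ((w i).interpF f) (funext ih)

theorem sat_pi_of_isAtomic {X : Sem} {ι : Type} {w : ι → Interp S} {Γ : Set (Formula S)}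
    {α : Formula S} (hα : α.isAtomic) {B : ℕ → (Interp.pi w).U} :
    Sat X (Interp.pi w) Γ α B ↔ ∀ i, Sat X (w i) Γ α fun x => B x i := by
  cases α with
  | atom p ts =>
    simp only [Sat, ← Term.eval_pi]
    rfl
  | eq t₁ t₂ =>
    simp only [Sat, ← Term.eval_pi]
    exact funext_iff
  | _ => exact hα.elim

theorem Interp.posDiagram_pi {ι : Type} [Nonempty ι] (w : ι → Interp S) :
    (Interp.pi w).posDiagram = ⋂ i, (w i).posDiagram := by
  ext α
  rw [Set.mem_iInter]
  by_cases hα : α.IsGroundAtom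
  · have hatomic : α.isAtomic := by cases hα <;> trivial
    rw [← hα.sat_iff_mem_posDiagram (X := Sem.any) (Γ := ∅) (B := fun _ => (Interp.pi w).dflt),
      sat_pi_of_isAtomic hatomic]
    exact forall_congr' fun _ => hα.sat_iff_mem_posDiagram
  · exact iff_of_false (fun h => hα h.1) fun h => hα (h (Classical.arbitrary ι)).1

theorem update_proj {ι : Type} (w : ι → Interp S) (B : ℕ → (Interp.pi w).U) (x : ℕ)
    (u : (Interp.pi w).U) (i : ι) :
    (fun y => Function.update B x u y i) = Function.update (fun y => B y i) x (u i) :=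
  funext fun y => Function.apply_update (fun _ (v : (Interp.pi w).U) => v i) B x u y

namespace Formula.PreservedByProducts

variable {φ : Formula S}

theorem of_isAtomic (hφ : φ.isAtomic) : φ.PreservedByProducts :=
  fun _ _ _ _ => (sat_pi_of_isAtomic hφ).2

theorem all (h : φ.PreservedByProducts) (x : ℕ) : (φ.all x).PreservedByProducts := by
  intro ι _ w B hB
  simp only [sat_all] at hB ⊢
  refine fun u => h w _ fun i => ?_
  rw [update_proj]
  exact hB i (u i)

theorem ex (h : φ.PreservedByProducts) (x : ℕ) : (φ.ex x).PreservedByProducts := by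
  intro ι _ w B hB
  choose u hu using hB
  refine ⟨u, h w _ fun i => ?_⟩
  have hproj := update_proj w B x u i
  exact hproj ▸ hu i

theorem uclosure (h : φ.PreservedByProducts) (vs : List ℕ) :
    (uclosure vs φ).PreservedByProducts := by
  induction vs with
  | nil => exact h
  | cons x vs ih => exact ih.all x

theorem exClosure (h : φ.PreservedByProducts) (ys : List ℕ) :
    (exClosure ys φ).PreservedByProducts := by
  induction ys with
  | nil => exact h
  | cons y ys ih => exact ih.ex y

theorem impOf (h : φ.PreservedByProducts) {bs : List (Formula S)} (hbs : ∀ b ∈ bs, b.isAtomic) :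
    (impOf bs φ).PreservedByProducts := by
  intro ι _ w B hB
  simp only [sat_impOf] at hB ⊢
  exact fun hb => h w B fun i =>
    hB i fun ψ hψ => (sat_pi_of_isAtomic (hbs ψ hψ)).1 (hb ψ hψ) i

theorem not_andAll {b : Formula S} {bs : List (Formula S)} (hbs : ∀ c ∈ b :: bs, c.isAtomic) :
    (andAll b bs).not.PreservedByProducts := by
  intro ι _ w B hB
  simp only [Sat, sat_andAll] at hB ⊢
  exact fun hb => hB (Classical.arbitrary ι) fun ψ hψ =>
    (sat_pi_of_isAtomic (hbs ψ hψ)).1 (hb ψ hψ) _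

end Formula.PreservedByProducts

theorem isGHornSentence.preservedByProducts {φ : Formula S} (h : isGHornSentence φ) :
    φ.PreservedByProducts := by
  obtain ⟨vs, bs, hbs, ⟨ys, h, hh, -, rfl⟩ | ⟨b, rest, rfl, rfl⟩⟩ := h
  · exact ((Formula.PreservedByProducts.of_isAtomic hh).exClosure ys |>.impOf hbs).uclosure vs
  · exact (Formula.PreservedByProducts.not_andAll hbs).uclosure vs

theorem GHornTheory.closedUnderProducts {Φ : Set (Formula S)} (hΦ : GHornTheory Φ) :
    ClosedUnderProducts Φ :=
  fun _ _ w hw φ hφ B => (hΦ.2 φ hφ).preservedByProducts w B fun i => hw i φ hφ _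

end Products

/-! ### Ground programs -/

/-- `M` satisfies the reduct of the ground rule `r` by `A` (vacuously if `r` is deleted). -/
def Rule.ReductSatBy (r : Rule S) (A M : Set (Formula S)) : Prop :=
  (∀ b ∈ r.pos, b.toFormula ∈ M) → (∀ c ∈ r.neg, c.toFormula ∉ A) → ∃ h ∈ r.head, h.toFormula ∈ M

/-- The equations between distinct names of `Σ_P`. -/
def distinctNameEqs (P : Program S) : Set (Formula S) :=
  {φ | ∃ t₁ t₂ : Term S, t₁.isNameOf (progFuncs P) ∧ t₂.isNameOf (progFuncs P) ∧ t₁ ≠ t₂ ∧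
    φ = Formula.eq t₁ t₂}

/-- The equality-free objective ground atoms of `Σ_P`. -/
def progAtoms (P : Program S) : Set (Formula S) :=
  {φ | ∃ a : PAtom S, a.p ∈ progPreds P ∧ (∀ i, (a.args i).isNameOf (progFuncs P)) ∧
    φ = a.toFormula}

section Programs

variable {X : Sem} {w : Interp S} {Γ : Set (Formula S)} {P : Program S}

theorem toFormula_mem_progAtoms (hg : progGround P) {r : Rule S} (hr : r ∈ P) {a : PAtom S}
    (ha : a ∈ r.atoms) : a.toFormula ∈ progAtoms P := by
  refine ⟨a, ⟨r, hr, a, ha, rfl⟩, fun i => ?_, rfl⟩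
  exact Term.isNameOf_of_isGround ((hg r hr).1 a ha i) fun f hf =>
    ⟨r, hr, a, ha, Set.mem_iUnion.2 ⟨i, hf⟩⟩

theorem progNormal.head_ne_nil (hn : progNormal P) : ∀ r ∈ P, r.head ≠ [] := fun r hr =>
  List.ne_nil_of_length_pos (Nat.lt_of_lt_of_eq Nat.one_pos (hn r hr).symm)

theorem Rule.ReductSatBy.inter {r : Rule S} {A M N : Set (Formula S)} (hr : r.isNormal)
    (hM : r.ReductSatBy A M) (hN : r.ReductSatBy A N) : r.ReductSatBy A (M ∩ N) := by
  intro hpos hneg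
  obtain ⟨h, hh⟩ := List.length_eq_one_iff.1 hr
  have hhM := hM (fun b hb => (hpos b hb).1) hneg
  have hhN := hN (fun b hb => (hpos b hb).2) hneg
  simp only [hh, List.mem_singleton, exists_eq_left] at hhM hhN ⊢
  exact ⟨hhM, hhN⟩

theorem Rule.isGroundAtom_of_mem_atoms {r : Rule S} (hg : r.isGround) :
    (∀ h ∈ r.head, h.toFormula.IsGroundAtom) ∧ (∀ b ∈ r.pos, b.toFormula.IsGroundAtom) ∧
      ∀ c ∈ r.neg, c.toFormula.IsGroundAtom := by
  simpa only [Rule.atoms, List.forall_mem_append, and_assoc] using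
    fun a ha => PAtom.isGroundAtom_toFormula (hg.1 a ha)

theorem modelsF_embHP_iff {r : Rule S} (hr : r.head ≠ []) (hg : r.isGround) :
    ModelsF X w Γ (embHP r) ↔ r.ReductSatBy (ogaOf Γ) w.posDiagram := by
  refine modelsF_iff_of_forall_sat_iff fun B => ?_
  obtain ⟨hhead, hpos, hneg⟩ := r.isGroundAtom_of_mem_atoms hg
  rw [embHP, hg.2, uclosure, List.foldr_nil, sat_impOf, sat_disjOf (by simpa using hr)]
  simp only [bodyHP, List.forall_mem_append, List.forall_mem_map, and_imp]
  simp only [List.mem_map, exists_exists_and_eq_and]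
  refine imp_congr ?_ (imp_congr ?_ ?_)
  · exact forall₂_congr fun b hb => (hpos b hb).sat_iff_mem_posDiagram
  · exact forall₂_congr fun c hc => not_congr (hneg c hc).sat_box_iff
  · exact exists_congr fun h => and_congr_right fun hh => (hhead h hh).sat_iff_mem_posDiagram

theorem modelsF_embEH_iff {r : Rule S} (hr : r.head ≠ []) (hg : r.isGround) :
    ModelsF X w Γ (embEH r) ↔ r.ReductSatBy (ogaOf Γ) (w.posDiagram ∩ ogaOf Γ) := by
  refine modelsF_iff_of_forall_sat_iff fun B => ?_
  obtain ⟨hhead, hpos, hneg⟩ := r.isGroundAtom_of_mem_atoms hg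
  rw [embEH, hg.2, uclosure, List.foldr_nil, sat_impOf, sat_disjOf (by simpa using hr)]
  simp only [bodyE, List.forall_mem_append, List.forall_mem_map, and_imp]
  simp only [List.mem_map, exists_exists_and_eq_and]
  refine imp_congr ?_ (imp_congr ?_ ?_)
  · exact forall₂_congr fun b hb =>
      and_congr (hpos b hb).sat_iff_mem_posDiagram (hpos b hb).sat_box_iff
  · exact forall₂_congr fun c hc => not_congr (hneg c hc).sat_box_iff
  · exact exists_congr fun h => and_congr_right fun hh =>
      and_congr (hhead h hh).sat_iff_mem_posDiagram (hhead h hh).sat_box_iff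

theorem modelsT_ruleEmb_iff {emb : Rule S → Formula S} :
    ModelsT X w Γ (ruleEmb emb P) ↔ ∀ r ∈ P, ModelsF X w Γ (emb r) :=
  ⟨fun h r hr => h _ ⟨r, hr, rfl⟩, fun h _ ⟨r, hr, hφ⟩ => hφ ▸ h r hr⟩

theorem modelsT_UNAax_iff :
    ModelsT X w Γ (UNAax P) ↔ w.posDiagram ∩ distinctNameEqs P ⊆ ogaOf Γ := by
  have hax {t₁ t₂ : Term S} (h₁ : t₁.isNameOf (progFuncs P)) (h₂ : t₂.isNameOf (progFuncs P)) :
      ModelsF X w Γ (.imp (.not (.box (.eq t₁ t₂))) (.not (.eq t₁ t₂))) ↔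
        (Formula.eq t₁ t₂ ∈ w.posDiagram → Formula.eq t₁ t₂ ∈ ogaOf Γ) := by
    have hα := Formula.IsGroundAtom.eq (Term.isGround_of_isNameOf h₁) (Term.isGround_of_isNameOf h₂)
    refine modelsF_iff_of_forall_sat_iff fun B => ?_
    rw [sat_imp, Sat, hα.sat_box_iff, Sat, hα.sat_iff_mem_posDiagram, not_imp_not]
  constructor
  · rintro h _ ⟨hw, t₁, t₂, h₁, h₂, hne, rfl⟩
    exact (hax h₁ h₂).1 (h _ ⟨t₁, t₂, h₁, h₂, hne, rfl⟩) hw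
  · rintro h _ ⟨t₁, t₂, h₁, h₂, hne, rfl⟩
    exact (hax h₁ h₂).2 fun hw => h ⟨hw, t₁, t₂, h₁, h₂, hne, rfl⟩

theorem modelsT_PIAax_iff :
    ModelsT X w Γ (PIAax P) ↔ w.posDiagram ∩ progAtoms P ⊆ ogaOf Γ := by
  have hax {a : PAtom S} (ha : ∀ i, (a.args i).isNameOf (progFuncs P)) :
      ModelsF X w Γ (.imp a.toFormula (.box a.toFormula)) ↔
        (a.toFormula ∈ w.posDiagram → a.toFormula ∈ ogaOf Γ) := by
    have hα := PAtom.isGroundAtom_toFormula fun i => Term.isGround_of_isNameOf (ha i)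
    refine modelsF_iff_of_forall_sat_iff fun B => ?_
    rw [sat_imp, hα.sat_box_iff, hα.sat_iff_mem_posDiagram]
  constructor
  · rintro h _ ⟨hw, a, hp, ha, rfl⟩
    exact (hax ha).1 (h _ ⟨a, hp, ha, rfl⟩) hw
  · rintro h _ ⟨a, hp, ha, rfl⟩
    exact (hax ha).2 fun hw => h ⟨hw, a, hp, ha, rfl⟩

theorem modelsT_tauHP_iff (hP : ∀ r ∈ P, r.head ≠ []) (hg : progGround P) :
    ModelsT X w Γ (tauHP P) ↔ (∀ r ∈ P, r.ReductSatBy (ogaOf Γ) w.posDiagram) ∧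
      w.posDiagram ∩ distinctNameEqs P ⊆ ogaOf Γ := by
  rw [tauHP, modelsT_union, modelsT_ruleEmb_iff, modelsT_UNAax_iff]
  exact and_congr_left' (forall₂_congr fun r hr => modelsF_embHP_iff (hP r hr) (hg r hr))

theorem modelsT_tauEH_iff (hP : ∀ r ∈ P, r.head ≠ []) (hg : progGround P) :
    ModelsT X w Γ (tauEH P) ↔
      (∀ r ∈ P, r.ReductSatBy (ogaOf Γ) (w.posDiagram ∩ ogaOf Γ)) ∧
        w.posDiagram ∩ distinctNameEqs P ⊆ ogaOf Γ := by
  rw [tauEH, modelsT_union, modelsT_ruleEmb_iff, modelsT_UNAax_iff]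
  exact and_congr_left' (forall₂_congr fun r hr => modelsF_embEH_iff (hP r hr) (hg r hr))

theorem tauHPv_eq (P : Program S) : tauHPv P = tauHP P ∪ PIAax P :=
  Set.union_right_comm _ _ _

theorem ogaDetermined_tauHP (hP : ∀ r ∈ P, r.head ≠ []) (hg : progGround P) :
    OgaDetermined X (tauHP P) := fun _ _ h _ => by
  rw [modelsT_tauHP_iff hP hg, modelsT_tauHP_iff hP hg, h]

theorem ogaDetermined_tauEH (hP : ∀ r ∈ P, r.head ≠ []) (hg : progGround P) :
    OgaDetermined X (tauEH P) := fun _ _ h _ => by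
  rw [modelsT_tauEH_iff hP hg, modelsT_tauEH_iff hP hg, h]

theorem ogaDetermined_PIAax : OgaDetermined X (PIAax P) := fun _ _ h _ => by
  rw [modelsT_PIAax_iff, modelsT_PIAax_iff, h]

theorem ogaDetermined_tauHPv (hP : ∀ r ∈ P, r.head ≠ []) (hg : progGround P) :
    OgaDetermined X (tauHPv P) :=
  tauHPv_eq P ▸ (ogaDetermined_tauHP hP hg).union ogaDetermined_PIAax

end Programs

/-! ### Comparing the two embeddings -/

section Comparison

variable {X : Sem} {Φ Ψ Γ : Set (Formula S)} {P : Program S}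

theorem OgaStable.exists_posDiagram_eq_inter (hΦ : ∀ φ ∈ Φ, φ.isObjective)
    (hprod : ClosedUnderProducts Φ) (hΓ : OgaStable X (Φ ∪ Ψ) Γ) {w : Interp S}
    (hw : ModelsT X w Γ Φ) :
    ∃ w', ModelsT X w' Γ Φ ∧ w'.posDiagram = w.posDiagram ∩ ogaOf Γ := by
  have hcounter (β : {β : Formula S // β.IsGroundAtom ∧ β ∉ ogaOf Γ}) :
      ∃ v, ModelsT X v Γ (Φ ∪ Ψ) ∧ β.1 ∉ v.posDiagram := by
    simpa [hΓ.mem_ogaOf_iff, β.2.1] using β.2.2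
  choose v hv hβv using hcounter
  let factors : Option {β : Formula S // β.IsGroundAtom ∧ β ∉ ogaOf Γ} → Interp S
    | none => w
    | some β => v β
  have hfactors (i) : ModelsT X (factors i) Γ Φ := by
    cases i with
    | none => exact hw
    | some β => exact (modelsT_union.1 (hv β)).1
  refine ⟨Interp.pi factors, ?_, ?_⟩
  · rw [modelsT_congr_of_isObjective (X' := Sem.any) (Γ' := ∅) hΦ]
    exact hprod factors fun i => (modelsT_congr_of_isObjective hΦ).1 (hfactors i)
  · rw [Interp.posDiagram_pi, Set.iInter_option]
    refine Set.Subset.antisymm (fun α ⟨hαw, hαv⟩ => ⟨hαw, ?_⟩)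
      (Set.inter_subset_inter_right _ (Set.subset_iInter fun β α hα =>
        (hΓ.mem_ogaOf_iff.1 hα).2 _ (hv β)))
    by_contra hα
    exact hβv ⟨α, hαw.1, hα⟩ (Set.mem_iInter.1 hαv ⟨α, hαw.1, hα⟩)

theorem ogaStable_union_iff {Ψ₁ Ψ₂ : Set (Formula S)} (hΦ : ∀ φ ∈ Φ, φ.isObjective)
    (hprod : ClosedUnderProducts Φ)
    (h₁₂ : OgaStable X (Φ ∪ Ψ₁) Γ ∨ OgaStable X (Φ ∪ Ψ₂) Γ →
      ∀ w, ModelsT X w Γ Ψ₁ → ModelsT X w Γ Ψ₂)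
    (h₂₁ : ∀ w w' : Interp S, w'.posDiagram = w.posDiagram ∩ ogaOf Γ →
      ModelsT X w Γ Ψ₂ → ModelsT X w' Γ Ψ₁) :
    OgaStable X (Φ ∪ Ψ₁) Γ ↔ OgaStable X (Φ ∪ Ψ₂) Γ := by
  have heq (hΓ : OgaStable X (Φ ∪ Ψ₁) Γ ∨ OgaStable X (Φ ∪ Ψ₂) Γ) :
      ogaOf {φ | Entails X (Φ ∪ Ψ₁) Γ φ} = ogaOf {φ | Entails X (Φ ∪ Ψ₂) Γ φ} := by
    ext α
    simp only [mem_ogaOf_setOf_entails, modelsT_union]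
    refine and_congr_right fun _ => ⟨fun hα w ⟨hwΦ, hwΨ⟩ => ?_, fun hα w ⟨hwΦ, hwΨ⟩ =>
      hα w ⟨hwΦ, h₁₂ hΓ w hwΨ⟩⟩
    obtain ⟨w', hw'Φ, hw'⟩ := hΓ.elim
      (fun h => h.exists_posDiagram_eq_inter hΦ hprod hwΦ)
      (fun h => h.exists_posDiagram_eq_inter hΦ hprod hwΦ)
    have hαw' := hα w' ⟨hw'Φ, h₂₁ w w' hw' hwΨ⟩
    exact (hw' ▸ hαw').1
  exact ⟨fun h => h.trans (heq (.inl h)), fun h => h.trans (heq (.inr h)).symm⟩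

theorem modelsT_tauHPv_of_tauEH (hP : ∀ r ∈ P, r.head ≠ []) (hg : progGround P) {w w' : Interp S}
    (hw' : w'.posDiagram = w.posDiagram ∩ ogaOf Γ) (hw : ModelsT X w Γ (tauEH P)) :
    ModelsT X w' Γ (tauHPv P) := by
  have hsub : w'.posDiagram ⊆ ogaOf Γ := hw'.trans_subset Set.inter_subset_right
  rw [tauHPv_eq, modelsT_union, modelsT_tauHP_iff hP hg, modelsT_PIAax_iff, hw']
  rw [hw'] at hsub
  exact ⟨⟨((modelsT_tauEH_iff hP hg).1 hw).1, Set.inter_subset_left.trans hsub⟩,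
    Set.inter_subset_left.trans hsub⟩

theorem modelsT_tauEHv_of_tauHPv (hP : ∀ r ∈ P, r.head ≠ []) (hg : progGround P) {w : Interp S}
    (hw : ModelsT X w Γ (tauHPv P)) : ModelsT X w Γ (tauEHv P) := by
  rw [tauHPv_eq, modelsT_union, modelsT_tauHP_iff hP hg, modelsT_PIAax_iff] at hw
  obtain ⟨⟨hrules, huna⟩, hpia⟩ := hw
  refine (modelsT_tauEH_iff hP hg).2 ⟨fun r hr hpos hneg => ?_, huna⟩
  obtain ⟨h, hh, hhw⟩ := hrules r hr (fun b hb => (hpos b hb).1) hneg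
  have hatom : h ∈ r.atoms := by simp only [Rule.atoms, List.mem_append, hh, true_or]
  exact ⟨h, hh, hhw, hpia ⟨hhw, toFormula_mem_progAtoms hg hr hatom⟩⟩

theorem OgaStable.reductSatBy (hΓ : OgaStable X Ψ Γ) {r : Rule S} (hn : r.isNormal)
    (hg : r.isGround)
    (hr : ∀ w, ModelsT X w Γ Ψ → ∃ M ∈ Set.Icc (ogaOf Γ) w.posDiagram, r.ReductSatBy (ogaOf Γ) M) :
    r.ReductSatBy (ogaOf Γ) (ogaOf Γ) := by
  intro hpos hneg
  obtain ⟨h, hh⟩ := List.length_eq_one_iff.1 hn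
  have hmem : h ∈ r.head := hh ▸ List.mem_singleton_self h
  refine ⟨h, hmem, hΓ.mem_ogaOf_iff.2 ⟨(r.isGroundAtom_of_mem_atoms hg).1 h hmem, fun w hw => ?_⟩⟩
  obtain ⟨M, ⟨hΓM, hMw⟩, hM⟩ := hr w hw
  obtain ⟨h', hh', hM'⟩ := hM (fun b hb => hΓM (hpos b hb)) hneg
  rw [hh, List.mem_singleton] at hh'
  exact hMw (hh' ▸ hM')

theorem reductSatBy_ogaOf_of_ogaStable (hn : progNormal P) (hg : progGround P)
    (hΓ : OgaStable X (Φ ∪ tauHP P) Γ ∨ OgaStable X (Φ ∪ tauEH P) Γ) :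
    ∀ r ∈ P, r.ReductSatBy (ogaOf Γ) (ogaOf Γ) := by
  intro r hr
  rcases hΓ with hΓ | hΓ
  · refine hΓ.reductSatBy (hn r hr) (hg r hr) fun w hw => ⟨w.posDiagram, ⟨?_, le_rfl⟩, ?_⟩
    · exact fun α hα => (hΓ.mem_ogaOf_iff.1 hα).2 w hw
    · exact ((modelsT_tauHP_iff hn.head_ne_nil hg).1 (modelsT_union.1 hw).2).1 r hr
  · refine hΓ.reductSatBy (hn r hr) (hg r hr) fun w hw =>
      ⟨w.posDiagram ∩ ogaOf Γ, ⟨?_, Set.inter_subset_left⟩, ?_⟩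
    · exact fun α hα => ⟨(hΓ.mem_ogaOf_iff.1 hα).2 w hw, hα⟩
    · exact ((modelsT_tauEH_iff hn.head_ne_nil hg).1 (modelsT_union.1 hw).2).1 r hr

theorem modelsT_tauEH_of_tauHP (hn : progNormal P) (hg : progGround P)
    (hΓ : ∀ r ∈ P, r.ReductSatBy (ogaOf Γ) (ogaOf Γ)) {w : Interp S}
    (hw : ModelsT X w Γ (tauHP P)) : ModelsT X w Γ (tauEH P) :=
  have ⟨hrules, huna⟩ := (modelsT_tauHP_iff hn.head_ne_nil hg).1 hw
  (modelsT_tauEH_iff hn.head_ne_nil hg).2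
    ⟨fun r hr => (hrules r hr).inter (hn r hr) (hΓ r hr), huna⟩

end Comparison

end

theorem stmt17_general {S : Sig} (X : Sem) (Φ : Set (Formula S)) (hΦ : ∀ φ ∈ Φ, φ.isObjective)
    (hprod : ClosedUnderProducts Φ) :
    (∀ P : Program S, progWf P → progGround P →
        ExpEquivSel X ogaOf (Φ ∪ tauHPv P) (Φ ∪ tauEHv P)) ∧
    (∀ P : Program S, progNormal P → progGround P →
        ExpEquivSel X ogaOf (Φ ∪ tauHP P) (Φ ∪ tauEH P)) := by
  have hdet := ogaDetermined_of_isObjective (X := X) hΦ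
  refine ⟨fun P hwf hg => ?_, fun P hn hg => ?_⟩
  · have hP : ∀ r ∈ P, r.head ≠ [] := fun r hr => (hwf r hr).1
    exact expEquivSel_ogaOf_of_ogaStable_iff (hdet.union (ogaDetermined_tauHPv hP hg))
      (hdet.union (ogaDetermined_tauEH hP hg)) fun Γ =>
        ogaStable_union_iff hΦ hprod (fun _ _ => modelsT_tauEHv_of_tauHPv hP hg)
          fun _ _ => modelsT_tauHPv_of_tauEH hP hg
  · have hP := hn.head_ne_nil
    refine expEquivSel_ogaOf_of_ogaStable_iff (hdet.union (ogaDetermined_tauHP hP hg))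
      (hdet.union (ogaDetermined_tauEH hP hg)) fun Γ =>
        ogaStable_union_iff hΦ hprod (fun hΓ _ => ?_) fun _ _ hw' hw => ?_
    · exact modelsT_tauEH_of_tauHP hn hg (reductSatBy_ogaOf_of_ogaStable hn hg hΓ)
    · have hHPv := modelsT_tauHPv_of_tauEH hP hg hw' hw
      rw [tauHPv_eq, modelsT_union] at hHPv
      exact hHPv.1

/-- For a generalized Horn theory `Φ`: for every ground disjunctive
program `P`, `ι^∨_HP(Φ,P) ≡ᴱ_oga ι^∨_EH(Φ,P)`; and for every ground normal program
`P`, `ι_HP(Φ,P) ≡ᴱ_oga ι_EH(Φ,P)`. -/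
theorem stmt17 {S : Sig} (Φ : Set (Formula S)) (hΦ : GHornTheory Φ) :
    (∀ P : Program S, progWf P → progGround P → goodSig P → CoverSig Φ P →
        ExpEquivSel Sem.any ogaOf (Φ ∪ tauHPv P) (Φ ∪ tauEHv P)) ∧
    (∀ P : Program S, progWf P → progNormal P → progGround P → goodSig P → CoverSig Φ P →
        ExpEquivSel Sem.any ogaOf (Φ ∪ tauHP P) (Φ ∪ tauEH P)) := by
  have h := stmt17_general Sem.any Φ (fun φ hφ => (hΦ.1 φ hφ).1) hΦ.closedUnderProducts
  exact ⟨fun P hwf hg _ _ => h.1 P hwf hg, fun P _ hn hg _ _ => h.2 P hn hg⟩
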